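/- arXiv:2605.26351 — 2 statements merged into one kernel-verified Lean document; each statement's English description precedes it below -/
import Mathlib

section
/- Let X, V, B, Y be finite nonempty sets, π : V → B a map (the Markov-blanket projection), p : X × V → ℝ a prior with nonnegative values summing to 1, ε > 0, and let d_V : (X×V)×(X×V) → ℝ and d_B : (X×B)×(X×B) → ℝ be nonnegative symmetric distance functions satisfying d_B((x,π(v)),(x',π(v'))) ≤ d_V((x,v),(x',v')) for all x,x',v,v'. Let q' : (X×B) → Y → ℝ be a reduced channel (nonnegative, with Σ_{y} q'((x,b),y) = 1 for each (x,b)) satisfying the reduced ε-metric-DP constraints q'((x,b),y) ≤ exp(ε·d_B((x,b),(x',b')))·q'((x',b'),y) for all (x,b), (x',b') and all y, and define the full channel q by the conditionally dependent (CD) policy q((x,v),y) := q'((x,π(v)),y). Then for all (x,v), (x',v') with p(x,v) > 0 and p(x',v') > 0 and every y with q((x,v),y) > 0 and q((x',v'),y) > 0, it holds that |ln(Pr[(X,V)=(x,v)|Y=y] / Pr[(X,V)=(x',v')|Y=y]) − ln(p(x,v)/p(x',v'))| ≤ ε·d_V((x,v),(x',v')), where Pr[(X,V)=(x,v)|Y=y]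 := p(x,v)·q((x,v),y)/Σ_{(t,u)} p(t,u)·q((t,u),y). (Proposition 2: enforcing the reduced mDP constraints under the CD policy suffices for the bounded context-aware posterior leakage.) -/
/-- Proposition 2 (PL guarantee of the CD policy): if the reduced channel `q'`
on `X × B` satisfies the reduced ε-metric-DP constraints with respect to a
nonnegative symmetric distance `d_B` dominated by the full context-aware
distance `d_V`, then the full channel `q` defined by the CD policy
(`q((x,v),y) = q'((x,π v),y)`) achieves the bounded context-aware posterior
leakage on the full augmented secret domain `X × V`. -/
theorem cd_policy_reduced_mdp_implies_posterior_leakage_bound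
    (X V B Y : Type*) [Fintype X] [Fintype V] [Fintype B] [Fintype Y]
    [Nonempty X] [Nonempty V] [Nonempty B] [Nonempty Y]
    (π : V → B)
    (p : X × V → ℝ) (hp : ∀ s, 0 ≤ p s) (hpsum : ∑ s, p s = 1)
    (ε : ℝ) (hε : 0 < ε)
    (dV : (X × V) × (X × V) → ℝ) (dB : (X × B) × (X × B) → ℝ)
    (hdV : ∀ a b, 0 ≤ dV (a, b)) (hdVsymm : ∀ a b, dV (a, b) = dV (b, a))
    (hdB : ∀ a b, 0 ≤ dB (a, b)) (hdBsymm : ∀ a b, dB (a, b) = dB (b, a))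
    (hdom : ∀ x x' v v', dB ((x, π v), (x', π v')) ≤ dV ((x, v), (x', v')))
    (q' : X × B → Y → ℝ) (hq' : ∀ s y, 0 ≤ q' s y)
    (hq'sum : ∀ s, ∑ y, q' s y = 1)
    (hmdp : ∀ s s' y, q' s y ≤ Real.exp (ε * dB (s, s')) * q' s' y)
    (q : X × V → Y → ℝ) (hqdef : ∀ x v y, q (x, v) y = q' (x, π v) y) :
    ∀ x v x' v', 0 < p (x, v) → 0 < p (x', v') →
      ∀ y, 0 < q (x, v) y → 0 < q (x', v') y →
        |Real.log ((p (x, v) * q (x, v) y / ∑ t, p t * q t y) /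
            (p (x', v') * q (x', v') y / ∑ t, p t * q t y)) -
          Real.log (p (x, v) / p (x', v'))| ≤ ε * dV ((x, v), (x', v')) := by
  intro x v x' v' hpx hpx' y hqx hqx'
  have hS : 0 < ∑ t, p t * q t y := by
    have hnn : ∀ t ∈ (Finset.univ : Finset (X × V)), 0 ≤ p t * q t y := by
      rintro ⟨a, b⟩ _
      rw [hqdef]
      exact mul_nonneg (hp _) (hq' _ _)
    exact lt_of_lt_of_le (mul_pos hpx hqx)
      (Finset.single_le_sum (f := fun t => p t * q t y) hnn (Finset.mem_univ (x, v)))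
  rw [div_div_div_cancel_right₀ hS.ne', Real.log_div (mul_pos hpx hqx).ne' (mul_pos hpx' hqx').ne',
    Real.log_mul hpx.ne' hqx.ne', Real.log_mul hpx'.ne' hqx'.ne', Real.log_div hpx.ne' hpx'.ne']
  have key : ∀ a b a' b', 0 < q (a, b) y → 0 < q (a', b') y →
      Real.log (q (a, b) y) - Real.log (q (a', b') y) ≤ ε * dV ((a, b), (a', b')) := by
    intro a b a' b' h h'
    have h1 := hmdp (a, π b) (a', π b') y
    rw [← hqdef, ← hqdef] at h1
    have h2 := Real.log_le_log h h1
    rw [Real.log_mul (Real.exp_pos _).ne' h'.ne', Real.log_exp] at h2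
    have h3 := mul_le_mul_of_nonneg_left (hdom a a' b b') hε.le
    linarith
  have k1 := key x v x' v' hqx hqx'
  have k2 := key x' v' x v hqx' hqx
  rw [hdVsymm] at k2
  rw [abs_le]
  constructor <;> linarith
end

section
/- Let X and Y be finite nonempty sets, p : X → ℝ a prior with p(x) ≥ 0 for all x and Σ_{x∈X} p(x) = 1, q : X → Y → ℝ a channel (nonnegative rows summing to 1), d : X × X → ℝ nonnegative and symmetric, and ε > 0. If q satisfies ε-metric differential privacy, i.e., q(x,y) ≤ exp(ε·d(x,x'))·q(x',y) for all x, x' ∈ X and all y ∈ Y, then for all x, x' with p(x) > 0 and p(x') > 0 and every y ∈ Y with q(x,y) > 0 and q(x',y) > 0, the posterior leakage is bounded: |ln(Pr[X=x|Y=y]/Pr[X=x'|Y=y]) − ln(p(x)/p(x'))| ≤ ε·d(x,x'), where Pr[X=x|Y=y] := p(x)·q(x,y)/Σ_{t∈X} p(t)·q(t,y). (Meeting ε-mDP is sufficient to achieve the posterior-leakage bound PL((x,x');Q) ≤ ε·d(x,x').) -/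
/-- Meeting ε-metric differential privacy is sufficient to achieve the
posterior-leakage bound `PL((x,x');Q) ≤ ε·d(x,x')`. -/
theorem mdp_implies_posterior_leakage_bound
    (X Y : Type*) [Fintype X] [Fintype Y] [Nonempty X] [Nonempty Y]
    (p : X → ℝ) (hp : ∀ x, 0 ≤ p x) (hpsum : ∑ x, p x = 1)
    (q : X → Y → ℝ) (hq : ∀ x y, 0 ≤ q x y) (hqsum : ∀ x, ∑ y, q x y = 1)
    (d : X × X → ℝ) (hd : ∀ x x', 0 ≤ d (x, x'))
    (hdsymm : ∀ x x', d (x, x') = d (x', x))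
    (ε : ℝ) (hε : 0 < ε)
    (hmdp : ∀ x x' y, q x y ≤ Real.exp (ε * d (x, x')) * q x' y) :
    ∀ x x', 0 < p x → 0 < p x' → ∀ y, 0 < q x y → 0 < q x' y →
      |Real.log ((p x * q x y / ∑ t, p t * q t y) /
          (p x' * q x' y / ∑ t, p t * q t y)) -
        Real.log (p x / p x')| ≤ ε * d (x, x') := by
  intro x x' hx hx' y hy hy'
  have hS : 0 < ∑ t, p t * q t y :=
    Finset.sum_pos' (fun t _ => mul_nonneg (hp t) (hq t y))
      ⟨x, Finset.mem_univ x, mul_pos hx hy⟩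
  have key : ∀ a b, 0 < q a y → 0 < q b y →
      Real.log (q a y) ≤ ε * d (a, b) + Real.log (q b y) := by
    intro a b ha hb
    have h := Real.log_le_log ha (hmdp a b y)
    rwa [Real.log_mul (Real.exp_pos _).ne' hb.ne', Real.log_exp] at h
  have h1 := key x x' hy hy'
  have h2 := key x' x hy' hy
  rw [hdsymm x' x] at h2
  rw [div_div_div_cancel_right₀ hS.ne', Real.log_div (mul_pos hx hy).ne' (mul_pos hx' hy').ne',
    Real.log_mul hx.ne' hy.ne', Real.log_mul hx'.ne' hy'.ne', Real.log_div hx.ne' hx'.ne', abs_le]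
  constructor <;> linarith
end
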